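/- arXiv:2304.12268 — 4 statements merged into one kernel-verified Lean document; each statement's English description precedes it below -/
import Mathlib

section
/- Let N be a finite set of players with a distinguished platform player w_p ∈ N, and let S be a finite index set of sessions, where session s is an owner map P_s : {0,1,…,n_s} → N (n_s ≥ 1) with P_s(0) = w_p and P_s(k) ≠ w_p for 1 ≤ k ≤ n_s, together with revenues r_s : {1,…,n_s} → ℝ satisfying r_s(k) ≥ 0 for all k. Then the multi-session game V under Assumptions 1 and 2 is convex (supermodular): for every player i ∈ N and all coalitions F ⊆ G ⊆ N∖{i}, V(F∪{i}) − V(F) ≤ V(G∪{i}) − V(G). -/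
open Finset

/-!
Each event contributes a nonnegative multiple of the unanimity game of the players owning it and
its predecessors. A unanimity game is supermodular because the coalitions on which it pays form an
up-set closed under intersection, and supermodularity is preserved by sums.
-/

/-- Supermodularity of a function on a lattice. On the lattice of coalitions this is convexity of a
cooperative game, written without subtraction so that values may lie in an ordered monoid. -/
def IsSupermodular {α M : Type*} [Lattice α] [Add M] [LE M] (f : α → M) : Prop :=
  ∀ a b, f a + f b ≤ f (a ⊔ b) + f (a ⊓ b)

/-- The unanimity game of `a`, scaled by `c`: on the lattice of coalitions it pays `c` to
exactly those containing all players of `a`. -/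
def unanimityGame {α M : Type*} [LE α] [DecidableLE α] [Zero M] (a : α) (c : M) (x : α) : M :=
  if a ≤ x then c else 0

theorem IsSupermodular.sum {α κ M : Type*} [Lattice α] [AddCommMonoid M] [Preorder M]
    [IsOrderedAddMonoid M] {s : Finset κ} {f : κ → α → M}
    (hf : ∀ k ∈ s, IsSupermodular (f k)) : IsSupermodular fun x => ∑ k ∈ s, f k x := by
  intro a b
  simp only [← sum_add_distrib]
  exact sum_le_sum fun k hk => hf k hk a b

theorem isSupermodular_unanimityGame {α M : Type*} [Lattice α] [DecidableLE α] [AddZeroClass M]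
    [Preorder M] (a : α) {c : M} (hc : 0 ≤ c) : IsSupermodular (unanimityGame a c) := by
  intro x y
  unfold unanimityGame
  by_cases hx : a ≤ x
  · simp [hx, le_sup_of_le_left hx]
  · by_cases hy : a ≤ y
    · simp [hx, hy, le_sup_of_le_right hy]
    · have hsup : 0 ≤ if a ≤ x ⊔ y then c else 0 := ite_nonneg hc le_rfl
      simpa [hx, hy] using hsup

theorem IsSupermodular.insert_sub_le_insert_sub {N M : Type*} [DecidableEq N] [AddCommGroup M]
    [Preorder M] [IsOrderedAddMonoid M] {V : Finset N → M} (hV : IsSupermodular V) {i : N}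
    {F G : Finset N} (hFG : F ⊆ G) (hiG : i ∉ G) :
    V (insert i F) - V F ≤ V (insert i G) - V G := by
  have hsup : insert i F ⊔ G = insert i G := by
    rw [sup_eq_union, insert_union, union_eq_right.mpr hFG]
  have hinf : insert i F ⊓ G = F := by
    rw [inf_eq_inter, insert_inter_of_notMem hiG, inter_eq_left.mpr hFG]
  rw [sub_le_sub_iff]
  simpa only [hsup, hinf] using hV (insert i F) G

section Session

variable {N ι M : Type*} [DecidableEq N] [AddCommMonoid M]

/-- The single-session game `v` under Assumptions 1 and 2. Event `k` pays its revenue `r k` to the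
coalitions containing `P(E^k)`; event `0` earns nothing. -/
def sessionGame (n : ℕ) (P : ℕ → N) (r : ℕ → M) (F : Finset N) : M :=
  ∑ k ∈ Icc 1 n, unanimityGame ((range (k + 1)).image P) (r k) F

/-- The multi-session game `V` under Assumptions 1 and 2, the sum of the games of the sessions
in `S`. -/
def multiSessionGame (S : Finset ι) (n : ι → ℕ) (P : ι → ℕ → N) (r : ι → ℕ → M)
    (F : Finset N) : M :=
  ∑ s ∈ S, sessionGame (n s) (P s) (r s) F

variable [Preorder M] [IsOrderedAddMonoid M]

theorem isSupermodular_sessionGame {n : ℕ} (P : ℕ → N) {r : ℕ → M}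
    (hr : ∀ k, 1 ≤ k → k ≤ n → 0 ≤ r k) : IsSupermodular (sessionGame n P r) :=
  .sum fun k hk =>
    have ⟨one_le, le_n⟩ := mem_Icc.mp hk
    isSupermodular_unanimityGame _ (hr k one_le le_n)

theorem multi_session_game_A12_convex_general {S : Finset ι} {n : ι → ℕ} (P : ι → ℕ → N)
    {r : ι → ℕ → M} (hr : ∀ s ∈ S, ∀ k, 1 ≤ k → k ≤ n s → 0 ≤ r s k) :
    IsSupermodular (multiSessionGame S n P r) :=
  .sum fun s hs => isSupermodular_sessionGame (P s) (hr s hs)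

end Session

/-- The multi-session game `V` under Assumptions 1 and 2 is convex
(supermodular): for every player `i` and coalitions `F ⊆ G ⊆ N \ {i}`,
`V (F ∪ {i}) − V F ≤ V (G ∪ {i}) − V G`. -/
theorem multi_session_game_A12_convex
    {N : Type*} [Fintype N] [DecidableEq N] {ι : Type*}
    (wp : N) (S : Finset ι) (ns : ι → ℕ) (P : ι → ℕ → N) (r : ι → ℕ → ℝ)
    (hns : ∀ s ∈ S, 1 ≤ ns s)
    (hP0 : ∀ s ∈ S, P s 0 = wp)
    (hPk : ∀ s ∈ S, ∀ k, 1 ≤ k → k ≤ ns s → P s k ≠ wp)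
    (hr : ∀ s ∈ S, ∀ k, 1 ≤ k → k ≤ ns s → 0 ≤ r s k)
    (V : Finset N → ℝ)
    (hV : ∀ F : Finset N, V F = ∑ s ∈ S, ∑ k ∈ Finset.Icc 1 (ns s),
      if (Finset.range (k + 1)).image (P s) ⊆ F then r s k else 0)
    (i : N) (F G : Finset N) (hFG : F ⊆ G) (hiG : i ∉ G) :
    V (insert i F) - V F ≤ V (insert i G) - V G := by
  obtain rfl : V = multiSessionGame S ns P r := funext hV
  exact (multi_session_game_A12_convex_general P hr).insert_sub_le_insert_sub hFG hiG
end

section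
/- Let N be a finite set of players with a distinguished platform player w_p ∈ N, let a session be given by an owner map P : {0,1,…,n} → N (n ≥ 1) with P(0) = w_p and P(k) ≠ w_p for 1 ≤ k ≤ n, and revenues r : {1,…,n} → ℝ, and let α be any discrete attenuation function. Then the α-Shapley rule is efficient: Σ_{i ∈ N} ES^α_i = Σ_{k=1}^{n} r(k). -/
open Finset

section Fiberwise

variable {N ι M : Type*} [DecidableEq N] [AddCommMonoid M]

theorem sum_ite_eq_add_sum_fiberwise {s : Finset N} {t : Finset ι} {P : ι → N} {a : N}
    (ha : a ∈ s) (hP : ∀ l ∈ t, P l ∈ s) (c : M) (f : ι → M) :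
    ∑ i ∈ s, ((if i = a then c else 0) + ∑ l ∈ t with P l = i, f l) = c + ∑ l ∈ t, f l := by
  rw [sum_add_distrib, sum_ite_eq', if_pos ha, sum_fiberwise_of_maps_to hP]

end Fiberwise

/-- The total attenuation at event `k`, the common denominator of the weights `w_i(k)`. The
summand `1` is the contribution of the platform's event `0`, which is not attenuated. -/
def totalAttenuation {K : Type*} [Semiring K] (α : ℕ → K) (k : ℕ) : K :=
  1 + ∑ j ∈ Icc 1 k, α (k - j)

theorem totalAttenuation_pos {K : Type*} [Semiring K] [PartialOrder K] [IsOrderedRing K]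
    [Nontrivial K] {α : ℕ → K} (hα : ∀ k, 0 ≤ α k) (k : ℕ) : 0 < totalAttenuation α k :=
  add_pos_of_pos_of_nonneg one_pos (sum_nonneg fun _ _ => hα _)

section Shapley

variable {N K : Type*} [DecidableEq N] [DivisionSemiring K]

/-- The weight `w_i(k)`: the fraction of the revenue of event `k` that goes to player `i`, when
`wp` is the platform and `P` the owner map. The platform's event `0` is encoded by the
indicator `i = wp`. -/
def alphaShapleyWeight (α : ℕ → K) (P : ℕ → N) (wp i : N) (k : ℕ) : K :=
  ((if i = wp then 1 else 0) + ∑ l ∈ Icc 1 k with P l = i, α (k - l)) / totalAttenuation α k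

/-- The `α`-Shapley share `ES^α_i` of player `i` in a session with events `0, …, n` and
revenues `r 1, …, r n`. -/
def alphaShapleyShare (α : ℕ → K) (P : ℕ → N) (r : ℕ → K) (wp : N) (n : ℕ) (i : N) : K :=
  ∑ k ∈ Icc 1 n, alphaShapleyWeight α P wp i k * r k

variable {α : ℕ → K} {P : ℕ → N} {wp : N} {s : Finset N}

theorem sum_alphaShapleyWeight {k : ℕ} (hα : totalAttenuation α k ≠ 0) (hwp : wp ∈ s)
    (hP : ∀ l ∈ Icc 1 k, P l ∈ s) : ∑ i ∈ s, alphaShapleyWeight α P wp i k = 1 := by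
  simp only [alphaShapleyWeight]
  rw [← sum_div, sum_ite_eq_add_sum_fiberwise hwp hP]
  exact div_self hα

theorem alpha_shapley_efficient_general {n : ℕ} (hα : ∀ k ∈ Icc 1 n, totalAttenuation α k ≠ 0)
    (hwp : wp ∈ s) (hP : ∀ l ∈ Icc 1 n, P l ∈ s) (r : ℕ → K) :
    ∑ i ∈ s, alphaShapleyShare α P r wp n i = ∑ k ∈ Icc 1 n, r k := by
  simp only [alphaShapleyShare]
  rw [sum_comm]
  refine sum_congr rfl fun k hk => ?_
  have owners_mem : ∀ l ∈ Icc 1 k, P l ∈ s := fun l hl =>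
    hP l (Icc_subset_Icc_right (mem_Icc.mp hk).2 hl)
  rw [← sum_mul, sum_alphaShapleyWeight (hα k hk) hwp owners_mem, one_mul]

end Shapley

/-- For any discrete attenuation function `α`, the `α`-Shapley rule
is efficient: `Σ_{i ∈ N} ES^α_i = Σ_{k=1}^{n} r(k)`. -/
theorem alpha_shapley_efficient
    {N : Type*} [Fintype N] [DecidableEq N]
    (wp : N) (n : ℕ) (hn : 1 ≤ n) (P : ℕ → N) (r : ℕ → ℝ)
    (hP0 : P 0 = wp)
    (hPk : ∀ k, 1 ≤ k → k ≤ n → P k ≠ wp)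
    (α : ℕ → ℝ)
    (hα01 : ∀ k : ℕ, 0 ≤ α k ∧ α k ≤ 1)
    (hα0 : α 0 = 1)
    (hαmono : ∀ k : ℕ, 1 ≤ k → α k ≤ α (k - 1))
    (ES : N → ℝ)
    (hES : ∀ i : N, ES i = ∑ k ∈ Finset.Icc 1 n,
      (((if i = wp then (1 : ℝ) else 0) +
          ∑ l ∈ (Finset.Icc 1 k).filter (fun l => P l = i), α (k - l)) /
        (1 + ∑ j ∈ Finset.Icc 1 k, α (k - j))) * r k) :
    ∑ i : N, ES i = ∑ k ∈ Finset.Icc 1 n, r k := by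
  rw [sum_congr rfl fun i _ => hES i]
  exact alpha_shapley_efficient_general
    (fun k _ => (totalAttenuation_pos (fun m => (hα01 m).1) k).ne') (mem_univ wp)
    (fun l _ => mem_univ (P l)) r
end

section
/- Let N and N' be finite sets of players with distinguished platform players w_p ∈ N and w_p' ∈ N', let a session be given by an owner map P : {0,1,…,n} → N (n ≥ 1) with P(0) = w_p and P(k) ≠ w_p for 1 ≤ k ≤ n, and revenues r : {1,…,n} → ℝ, and let g : N → N' be a map with g(w_p) = w_p' and g(i) ≠ w_p' for all i ≠ w_p (so that g∘P is a valid owner map for a session over N'). Then the event-Shapley rule is non-manipulable: for every j ∈ N', the event-Shapley share of j in the relabeled session (owner map g∘P, revenues r) equals Σ_{i ∈ N : g(i) = j} ES_i, the sum of the event-Shapley shares in the original session of all players merged into j. -/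
open Finset

/-- The event-Shapley share of player `i` in the session with owner map `P` on the events `0, …, n`
and revenues `r` on the events `1, …, n`. Both are encoded as total functions, read only on these
ranges. Revenues lie in a `ℚ≥0`-module so that each `r k` can be split into `k + 1` equal parts. -/
def eventShapley {N M : Type*} [DecidableEq N] [AddCommMonoid M] [Module ℚ≥0 M]
    (n : ℕ) (P : ℕ → N) (r : ℕ → M) (i : N) : M :=
  ∑ k ∈ Icc 1 n, ((#{l ∈ range (k + 1) | P l = i} : ℚ≥0) / (k + 1)) • r k

theorem eventShapley_eq_sum_mul {N K : Type*} [DecidableEq N] [DivisionSemiring K] [CharZero K]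
    (n : ℕ) (P : ℕ → N) (r : ℕ → K) (i : N) :
    eventShapley n P r i =
      ∑ k ∈ Icc 1 n, ((#{l ∈ range (k + 1) | P l = i} : K) / (k + 1)) * r k := by
  simp only [eventShapley, NNRat.smul_def, NNRat.cast_div, NNRat.cast_add, NNRat.cast_natCast,
    NNRat.cast_one]

section

variable {N M : Type*} [DecidableEq N] [AddCommMonoid M] [Module ℚ≥0 M]

theorem sum_eventShapley (n : ℕ) (P : ℕ → N) (r : ℕ → M) (t : Finset N) :
    ∑ i ∈ t, eventShapley n P r i =
      ∑ k ∈ Icc 1 n, ((#{l ∈ range (k + 1) | P l ∈ t} : ℚ≥0) / (k + 1)) • r k := by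
  simp only [eventShapley]
  rw [sum_comm]
  refine sum_congr rfl fun k _ => ?_
  rw [← sum_smul, ← sum_div, ← Nat.cast_sum, sum_card_fiberwise_eq_card_filter]

theorem event_shapley_non_manipulable_general {N' : Type*} [DecidableEq N']
    (n : ℕ) (P : ℕ → N) (r : ℕ → M) (g : N → N') (s : Finset N) (hs : ∀ l ≤ n, P l ∈ s) (j : N') :
    eventShapley n (g ∘ P) r j = ∑ i ∈ s with g i = j, eventShapley n P r i := by
  rw [sum_eventShapley, eventShapley]
  refine sum_congr rfl fun k hk => ?_
  have merged_events : {l ∈ range (k + 1) | (g ∘ P) l = j} =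
      {l ∈ range (k + 1) | P l ∈ ({i ∈ s | g i = j} : Finset N)} := by
    refine filter_congr fun l hl => ?_
    have hln : l ≤ n := (mem_range_succ_iff.mp hl).trans (mem_Icc.mp hk).2
    simp only [Function.comp_apply, mem_filter, hs l hln, true_and]
  rw [merged_events]

end

/-- The event-Shapley rule is non-manipulable: if players are
relabeled (merged) via `g : N → N'` preserving the platform, then for every
`j ∈ N'`, the event-Shapley share of `j` in the relabeled session equals the sum
of the event-Shapley shares in the original session of all players merged into `j`. -/
theorem event_shapley_non_manipulable
    {N : Type*} [Fintype N] [DecidableEq N]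
    {N' : Type*} [Fintype N'] [DecidableEq N']
    (wp : N) (wp' : N') (n : ℕ) (hn : 1 ≤ n) (P : ℕ → N) (r : ℕ → ℝ)
    (hP0 : P 0 = wp)
    (hPk : ∀ k, 1 ≤ k → k ≤ n → P k ≠ wp)
    (g : N → N') (hg0 : g wp = wp') (hg : ∀ i : N, i ≠ wp → g i ≠ wp')
    (ES : N → ℝ) (ES' : N' → ℝ)
    (hES : ∀ i : N, ES i = ∑ k ∈ Finset.Icc 1 n,
      ((((Finset.range (k + 1)).filter (fun l => P l = i)).card : ℝ) / (k + 1)) * r k)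
    (hES' : ∀ j : N', ES' j = ∑ k ∈ Finset.Icc 1 n,
      ((((Finset.range (k + 1)).filter (fun l => g (P l) = j)).card : ℝ) / (k + 1)) * r k)
    (j : N') :
    ES' j = ∑ i ∈ Finset.univ.filter (fun i => g i = j), ES i := by
  simpa only [hES, hES', eventShapley_eq_sum_mul, Function.comp_apply] using
    event_shapley_non_manipulable_general n P r g univ (fun l _ => mem_univ (P l)) j
end

section
/- Let N and N' be finite sets of players with distinguished platform players w_p ∈ N and w_p' ∈ N', let a session be given by an owner map P : {0,1,…,n} → N (n ≥ 1) with P(0) = w_p and P(k) ≠ w_p for 1 ≤ k ≤ n, and revenues r : {1,…,n} → ℝ, and let g : N → N' be a map with g(w_p) = w_p' and g(i) ≠ w_p' for all i ≠ w_p (so that g∘P is a valid owner map for a session over N'). Then the Shapley allocation of the game under Assumptions 1 and 3 is non-manipulable: for every j ∈ N', Σ_{k=1}^{n} ([j ∈ {g(P(0)), g(P(k))}] / 2) · r(k) = Σ_{i ∈ N : g(i) = j} Σ_{k=1}^{n} ([i ∈ {P(0), P(k)}] / 2) · r(k), where [·] denotes the indicator. -/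
open Finset

/-!
The game is a sum of multiples of unanimity games, one for each event, whose carrier is the set of
owners sharing its revenue. A relabeling that is injective on a carrier keeps its cardinality, hence
the size of each share, and sends at most one of its members to any given `j`. So the players merged
into `j` receive together exactly one share if `j` lies in the image of the carrier, and nothing
otherwise. A relabeling that separates the platform `P 0` from all other players is injective on
each carrier `{P 0, P k}`.
-/

theorem sum_filter_ite_mem_of_injOn {α β M : Type*} [DecidableEq α] [DecidableEq β]
    [AddCommMonoid M] {s t : Finset α} {g : α → β} (hst : s ⊆ t) (hg : Set.InjOn g s)
    (b : β) (c : M) :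
    (∑ a ∈ t with g a = b, if a ∈ s then c else 0) = if b ∈ s.image g then c else 0 := by
  calc (∑ a ∈ t with g a = b, if a ∈ s then c else 0)
      = ∑ a ∈ t, if a ∈ s then (if g a = b then c else 0) else 0 := by
        rw [sum_filter]
        exact sum_congr rfl fun a _ ↦ by split_ifs <;> rfl
    _ = ∑ a ∈ s, if g a = b then c else 0 := by
        rw [sum_ite_mem, inter_eq_right.mpr hst]
    _ = ∑ b' ∈ s.image g, if b' = b then c else 0 :=
        (sum_image (f := fun b' ↦ if b' = b then c else 0) hg).symm
    _ = if b ∈ s.image g then c else 0 := sum_ite_eq' _ _ _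

/-- The Shapley allocation of the game `F ↦ ∑ k ∈ events with S k ⊆ F, r k`, in closed form: the
revenue `r k` is shared equally among the members of the carrier `S k`. An event with empty carrier
contributes nothing to any player. -/
noncomputable def shapleyAllocation {ι N : Type*} [DecidableEq N] (events : Finset ι)
    (S : ι → Finset N) (r : ι → ℝ) (i : N) : ℝ :=
  ∑ k ∈ events, (if i ∈ S k then (1 : ℝ) else 0) / #(S k) * r k

theorem shapleyAllocation_pair {ι N : Type*} [DecidableEq N] {events : Finset ι} {p : N}
    {P : ι → N} (hP : ∀ k ∈ events, p ≠ P k) (r : ι → ℝ) (i : N) :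
    shapleyAllocation events (fun k ↦ {p, P k}) r i =
      ∑ k ∈ events, (if i ∈ ({p, P k} : Finset N) then (1 : ℝ) else 0) / 2 * r k :=
  sum_congr rfl fun k hk ↦ by rw [card_pair (hP k hk), Nat.cast_ofNat]

theorem shapley_allocation_A13_non_manipulable_general {ι N N' : Type*} [DecidableEq N]
    [DecidableEq N'] {players : Finset N} {events : Finset ι} {S : ι → Finset N} {g : N → N'}
    (hS : ∀ k ∈ events, S k ⊆ players) (hg : ∀ k ∈ events, Set.InjOn g (S k)) (r : ι → ℝ)
    (j : N') :
    shapleyAllocation events (fun k ↦ (S k).image g) r j =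
      ∑ i ∈ players with g i = j, shapleyAllocation events S r i := by
  simp only [shapleyAllocation]
  rw [sum_comm]
  refine sum_congr rfl fun k hk ↦ ?_
  rw [← sum_mul, ← sum_div, sum_filter_ite_mem_of_injOn (hS k hk) (hg k hk),
    card_image_of_injOn (hg k hk)]

/-- The Shapley allocation of the game under Assumptions 1 and 3 is
non-manipulable: if players are relabeled (merged) via `g : N → N'` preserving the
platform, then for every `j ∈ N'`,
`Σ_{k=1}^{n} ([j ∈ {g(P(0)), g(P(k))}] / 2) · r(k)
  = Σ_{i : g(i) = j} Σ_{k=1}^{n} ([i ∈ {P(0), P(k)}] / 2) · r(k)`. -/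
theorem shapley_allocation_A13_non_manipulable
    {N : Type*} [Fintype N] [DecidableEq N]
    {N' : Type*} [Fintype N'] [DecidableEq N']
    (wp : N) (wp' : N') (n : ℕ) (hn : 1 ≤ n) (P : ℕ → N) (r : ℕ → ℝ)
    (hP0 : P 0 = wp)
    (hPk : ∀ k, 1 ≤ k → k ≤ n → P k ≠ wp)
    (g : N → N') (hg0 : g wp = wp') (hg : ∀ i : N, i ≠ wp → g i ≠ wp')
    (j : N') :
    (∑ k ∈ Finset.Icc 1 n,
        (if j ∈ ({g (P 0), g (P k)} : Finset N') then (1 : ℝ) else 0) / 2 * r k)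
      = ∑ i ∈ Finset.univ.filter (fun i => g i = j), ∑ k ∈ Finset.Icc 1 n,
          (if i ∈ ({P 0, P k} : Finset N) then (1 : ℝ) else 0) / 2 * r k := by
  have hgP : ∀ k ∈ Icc 1 n, g (P 0) ≠ g (P k) := fun k hk ↦ by
    rw [hP0, hg0]
    exact (hg _ (hPk k (mem_Icc.mp hk).1 (mem_Icc.mp hk).2)).symm
  have hP : ∀ k ∈ Icc 1 n, P 0 ≠ P k := fun k hk ↦ ne_of_apply_ne g (hgP k hk)
  have hinj : ∀ k ∈ Icc 1 n, Set.InjOn g ({P 0, P k} : Finset N) := fun k hk ↦ by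
    rw [coe_pair, Set.injOn_pair]
    exact fun h ↦ absurd h (hgP k hk)
  have hmerge := shapley_allocation_A13_non_manipulable_general
    (fun k _ ↦ subset_univ _) hinj r j
  simpa only [image_insert, image_singleton, shapleyAllocation_pair hgP,
    shapleyAllocation_pair hP] using hmerge
end
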